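/- Let n ≥ 1 and let X be a space that is sequentially (n−1)-connected at x₀ ∈ X. Suppose f : I^n → X is continuous and U ⊆ (0,1)^n is open with f(∂U) = {x₀}. Then for every Whitney cover 𝒞 of U there exists a continuous g : I^n → X such that: f is homotopic to g by a homotopy constant on I^n \ U; g(∂C) = {x₀} for every C ∈ 𝒞; and for each C ∈ 𝒞 there is an n-cube K ⊆ int(C) with g|_K equal to f|_C up to the canonical affine reparameterization. -/

import Mathlib

open Set unitInterval

/-- Membership in the closed `n`-cube with corners `c, d`. -/
def inCube {n : ℕ} (c d : Fin n → ℝ) (y : Fin n → I) : Prop :=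
  ∀ i, c i ≤ (y i : ℝ) ∧ (y i : ℝ) ≤ d i

/-- Membership in the interior of the `n`-cube with corners `c, d`. -/
def inCubeInt {n : ℕ} (c d : Fin n → ℝ) (y : Fin n → I) : Prop :=
  ∀ i, c i < (y i : ℝ) ∧ (y i : ℝ) < d i

/-- Membership in the boundary of the `n`-cube with corners `c, d`. -/
def onCubeBdry {n : ℕ} (c d : Fin n → ℝ) (y : Fin n → I) : Prop :=
  inCube c d y ∧ ∃ i, (y i : ℝ) = c i ∨ (y i : ℝ) = d i

/-- The canonical increasing affine map sending the cube with corners `c, d` onto the cube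
with corners `c', d'` (clamped back into `I` coordinatewise). -/
noncomputable def cubeAffine {n : ℕ} (c d c' d' : Fin n → ℝ) (y : Fin n → I) : Fin n → I :=
  fun i => Set.projIcc (0:ℝ) 1 zero_le_one
    (c' i + ((y i : ℝ) - c i) / (d i - c i) * (d' i - c' i))


/-- A countable family of maps clusters at (converges toward) a point. -/
def ClustersAt {K Z X : Type*} [TopologicalSpace Z] [TopologicalSpace X]
    (f : K → C(Z, X)) (x : X) : Prop :=
  ∀ U ∈ nhds x, {k : K | ¬ Set.range (f k) ⊆ U}.Finite

/-- `X` is sequentially `n`-connected at `x`: for each `0 ≤ k ≤ n`, every sequence of based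
`k`-loops (maps `I^k → X` sending the boundary of the cube, i.e. `S^k → X` based maps, to `x`)
that converges to `x` admits a sequence of based null-homotopies converging to `x`. -/
def SeqNConnectedAt (n : ℕ) (X : Type*) [TopologicalSpace X] (x : X) : Prop :=
  ∀ k ≤ n, ∀ f : ℕ → C((Fin k → I), X),
    (∀ m, ∀ y ∈ Cube.boundary (Fin k), f m y = x) →
    ClustersAt f x →
    ∃ H : ℕ → C((Fin k → I) × I, X),
      (∀ m y, H m (y, 0) = f m y) ∧
      (∀ m y, H m (y, 1) = x) ∧
      (∀ m t, ∀ y ∈ Cube.boundary (Fin k), H m (y, t) = x) ∧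
      ClustersAt H x


namespace NLoop

/-- relative interior condition -/
def RelInt {n : ℕ} (a b y : Fin n → ℝ) : Prop := ∀ i, a i < b i → a i < y i ∧ y i < b i

noncomputable def vv {n : ℕ} (a b y : Fin n → ℝ) : Fin n → ℝ :=
  fun i => (2 * y i - a i - b i) / (b i - a i)

noncomputable def rho {n : ℕ} (a b y : Fin n → ℝ) : ℝ := ‖vv a b y‖

noncomputable def Rc {n : ℕ} (a b y : Fin n → ℝ) (t : ℝ) : ℝ :=
  (1 + t) / max 1 ((1 + t) * rho a b y)

noncomputable def Rp {n : ℕ} (a b y : Fin n → ℝ) (t : ℝ) : Fin n → ℝ :=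
  fun i => (a i + b i) / 2 + Rc a b y t * (y i - (a i + b i) / 2)

noncomputable def Rt {n : ℕ} (a b y : Fin n → ℝ) (t : ℝ) : ℝ :=
  max 0 ((1 + t) * rho a b y - 1)

section R
variable {n : ℕ} {a b y : Fin n → ℝ} {t : ℝ}

lemma rho_nonneg : 0 ≤ rho a b y := norm_nonneg _

lemma abs_vv_le (hy : y ∈ Icc a b) (i : Fin n) : |vv a b y i| ≤ 1 := by
  have h1 := hy.1 i
  have h2 := hy.2 i
  rcases eq_or_lt_of_le (h1.trans h2) with h | h
  · simp [vv, h]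
  · have : 0 < b i - a i := by linarith
    rw [vv, abs_div, abs_of_pos this, div_le_one this, abs_le]
    constructor <;> linarith

lemma rho_le (hy : y ∈ Icc a b) : rho a b y ≤ 1 := by
  rw [rho, pi_norm_le_iff_of_nonneg zero_le_one]
  exact abs_vv_le hy

lemma mem_of_rho_le (hab : a ≤ b) (h : rho a b y ≤ 1) (hd : ∀ i, a i = b i → y i = a i) :
    y ∈ Icc a b := by
  rw [rho, pi_norm_le_iff_of_nonneg zero_le_one] at h
  have : ∀ i, a i ≤ y i ∧ y i ≤ b i := by
    intro i
    rcases eq_or_lt_of_le (hab i) with h' | h'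
    · have := hd i h'
      constructor <;> linarith
    · have h1 := h i
      have h2 : 0 < b i - a i := by linarith
      rw [vv, Real.norm_eq_abs, abs_div, abs_of_pos h2, div_le_one h2, abs_le] at h1
      constructor <;> linarith [h1.1, h1.2]
  exact ⟨fun i => (this i).1, fun i => (this i).2⟩

lemma rho_eq_one (hy : y ∈ Icc a b) (hr : ¬ RelInt a b y) : rho a b y = 1 := by
  apply le_antisymm (rho_le hy)
  simp only [RelInt, not_forall] at hr
  obtain ⟨i, hi, h⟩ := hr
  have h2 : 0 < b i - a i := by linarith
  have h3 := norm_le_pi_norm (vv a b y) i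
  have h1 := hy.1 i
  have h4 := hy.2 i
  refine le_trans ?_ h3
  rw [vv, Real.norm_eq_abs, abs_div, abs_of_pos h2, le_div_iff₀ h2, one_mul, le_abs]
  by_contra hc
  push Not at hc
  exact h ⟨by linarith, by linarith⟩

lemma not_relInt (hab : a ≤ b) (hr : 1 ≤ rho a b y) : ¬ RelInt a b y := by
  intro h
  have : rho a b y < 1 := by
    rw [rho, pi_norm_lt_iff zero_lt_one]
    intro i
    rcases lt_or_ge (a i) (b i) with h' | h'
    · have h2 : 0 < b i - a i := by linarith
      have := h i h'
      rw [vv, Real.norm_eq_abs, abs_div, abs_of_pos h2, div_lt_one h2, abs_lt]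
      constructor <;> linarith
    · have h2 : a i = b i := le_antisymm (hab i) h'
      simp [vv, h2]
  linarith

lemma max_pos' : 0 < max 1 ((1 + t) * rho a b y) := lt_of_lt_of_le one_pos (le_max_left _ _)

lemma Rc_nonneg (ht : 0 ≤ t) : 0 ≤ Rc a b y t := div_nonneg (by linarith) max_pos'.le

lemma vv_Rp : vv a b (Rp a b y t) = Rc a b y t • vv a b y := by
  funext i
  simp only [vv, Rp, Pi.smul_apply, smul_eq_mul]
  ring

lemma rho_Rp (ht : 0 ≤ t) : rho a b (Rp a b y t) = Rc a b y t * rho a b y := by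
  rw [rho, vv_Rp, norm_smul, Real.norm_of_nonneg (Rc_nonneg ht), rho]

lemma Rp_zero (hy : y ∈ Icc a b) : Rp a b y 0 = y := by
  funext i
  have := rho_le hy
  simp [Rp, Rc, max_eq_left this]

lemma Rt_zero (hy : y ∈ Icc a b) : Rt a b y 0 = 0 := by
  have := rho_le hy
  simp [Rt, this]

lemma Rp_bd (h : rho a b y = 1) (ht : 0 ≤ t) : Rp a b y t = y := by
  funext i
  have h1 : max 1 (1 + t) = 1 + t := max_eq_right (by linarith)
  have h2 : (1 + t) ≠ 0 := by linarith
  simp [Rp, Rc, h, h1, div_self h2]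

lemma Rt_bd (h : rho a b y = 1) (ht : 0 ≤ t) : Rt a b y t = t := by
  simp [Rt, h, ht]

lemma Rp_mem (hy : y ∈ Icc a b) (ht : 0 ≤ t) : Rp a b y t ∈ Icc a b := by
  apply mem_of_rho_le (fun i => (hy.1 i).trans (hy.2 i))
  · rw [rho_Rp ht, Rc, div_mul_eq_mul_div, div_le_one max_pos']
    exact le_max_right _ _
  · intro i hi
    have h1 : y i = a i := le_antisymm ((hy.2 i).trans hi.ge) (hy.1 i)
    simp only [Rp, h1, ← hi]
    ring

lemma Rt_mem (hy : y ∈ Icc a b) (ht : t ∈ Icc (0:ℝ) 1) : Rt a b y t ∈ Icc (0:ℝ) 1 := by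
  refine ⟨le_max_left _ _, max_le zero_le_one ?_⟩
  have := rho_le hy
  have h0 : 0 ≤ rho a b y := rho_nonneg
  nlinarith [ht.1, ht.2]

lemma Rt_eq_zero (h : (1 + t) * rho a b y ≤ 1) : Rt a b y t = 0 := by
  simp [Rt, h]

lemma Rp_not_relInt (hab : a ≤ b) (ht : 0 ≤ t) (h : 1 ≤ (1 + t) * rho a b y) :
    ¬ RelInt a b (Rp a b y t) := by
  apply not_relInt hab
  rw [rho_Rp ht, Rc, max_eq_right h, div_mul_eq_mul_div, div_self (by linarith)]

lemma cont_rho : Continuous (fun y => rho a b y) := by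
  unfold rho vv
  fun_prop

lemma cont_Rp : Continuous (fun p : (Fin n → ℝ) × ℝ => Rp a b p.1 p.2) := by
  have := cont_rho (a := a) (b := b)
  have h : Continuous (fun p : (Fin n → ℝ) × ℝ => Rc a b p.1 p.2) := by
    unfold Rc
    apply Continuous.div (by fun_prop)
    · exact continuous_const.max ((continuous_const.add continuous_snd).mul
        (this.comp continuous_fst))
    · intro p
      exact max_pos'.ne'
  unfold Rp
  fun_prop

lemma cont_Rt : Continuous (fun p : (Fin n → ℝ) × ℝ => Rt a b p.1 p.2) := by
  have := cont_rho (a := a) (b := b)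
  unfold Rt
  exact continuous_const.max (((continuous_const.add continuous_snd).mul
        (this.comp continuous_fst)).sub continuous_const)

lemma comp_cont {X : Type*} [TopologicalSpace X] {F : (Fin n → ℝ) → X} (hF : Continuous F)
    {h : (Fin n → ℝ) × ℝ → X} (h0 : ∀ y, h (y, 0) = F y) {Q : Set (Fin n → ℝ)}
    (hc : ContinuousOn h (Q ×ˢ Icc (0:ℝ) 1))
    (hQ : ∀ y ∈ Icc a b, ¬ RelInt a b y → y ∈ Q) :
    ContinuousOn (fun p : (Fin n → ℝ) × ℝ => h (Rp a b p.1 p.2, Rt a b p.1 p.2))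
      (Icc a b ×ˢ Icc (0:ℝ) 1) := by
  have hcm : Continuous (fun p : (Fin n → ℝ) × ℝ => (1 + p.2) * rho a b p.1) :=
    (continuous_const.add continuous_snd).mul (cont_rho.comp continuous_fst)
  have hcl : IsClosed (Icc a b ×ˢ Icc (0:ℝ) 1) := isClosed_Icc.prod isClosed_Icc
  have e : Icc a b ×ˢ Icc (0:ℝ) 1 =
      ((Icc a b ×ˢ Icc (0:ℝ) 1) ∩ {p | (1 + p.2) * rho a b p.1 ≤ 1}) ∪
      ((Icc a b ×ˢ Icc (0:ℝ) 1) ∩ {p | 1 ≤ (1 + p.2) * rho a b p.1}) := by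
    rw [← inter_union_distrib_left]
    refine (inter_eq_left.2 ?_).symm
    intro p _
    exact le_total ((1 + p.2) * rho a b p.1) 1
  rw [e]
  apply ContinuousOn.union_of_isClosed
  · have : Continuous (fun p : (Fin n → ℝ) × ℝ => F (Rp a b p.1 p.2)) := hF.comp cont_Rp
    refine this.continuousOn.congr ?_
    rintro p ⟨_, hp⟩
    simp only [Rt_eq_zero hp, h0]
  · refine hc.comp (cont_Rp.prodMk cont_Rt).continuousOn ?_
    rintro p ⟨⟨hp1, hp2⟩, hp⟩
    exact ⟨hQ _ (Rp_mem hp1 hp2.1) (Rp_not_relInt (hp1.1.trans hp1.2) hp2.1 hp), Rt_mem hp1 hp2⟩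
  · exact hcl.inter (isClosed_le hcm continuous_const)
  · exact hcl.inter (isClosed_le continuous_const hcm)

/-- values of the composite -/
lemma comp_val {X : Type*} {F : (Fin n → ℝ) → X}
    {h : (Fin n → ℝ) × ℝ → X} (h0 : ∀ y, h (y, 0) = F y) {W : Set X} {Q : Set (Fin n → ℝ)}
    (hQ : ∀ y ∈ Icc a b, ¬ RelInt a b y → y ∈ Q)
    (hF : ∀ y ∈ Icc a b, F y ∈ W)
    (hW : ∀ y ∈ Icc a b, y ∈ Q → ∀ t ∈ Icc (0:ℝ) 1, h (y, t) ∈ W)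
    (hy : y ∈ Icc a b) (ht : t ∈ Icc (0:ℝ) 1) :
    h (Rp a b y t, Rt a b y t) ∈ W := by
  rcases le_total ((1 + t) * rho a b y) 1 with hp | hp
  · rw [Rt_eq_zero hp, h0]
    exact hF _ (Rp_mem hy ht.1)
  · exact hW _ (Rp_mem hy ht.1) (hQ _ (Rp_mem hy ht.1) (Rp_not_relInt (hy.1.trans hy.2) ht.1 hp))
      _ (Rt_mem hy ht)

end R
end NLoop

namespace NLoop

lemma glue {Z Y κ : Type*} [TopologicalSpace Z] [TopologicalSpace Y] (B : κ → Set Z)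
    (hB : ∀ i, IsClosed (B i)) (hloc : ∀ z ∈ ⋃ i, B i, ∃ N ∈ nhds z, {i | (B i ∩ N).Nonempty}.Finite)
    (g : Z → Y) (hg : ∀ i, ContinuousOn g (B i)) : ContinuousOn g (⋃ i, B i) := by
  intro z hz
  obtain ⟨N, hN, hfin⟩ := hloc z hz
  have h1 : ContinuousWithinAt g (⋃ i ∈ {i | (B i ∩ N).Nonempty}, B i) z := by
    rw [ContinuousWithinAt, nhdsWithin_biUnion hfin]
    simp only [Filter.tendsto_iSup]
    intro i _
    by_cases hzi : z ∈ B i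
    · exact hg i z hzi
    · have : nhdsWithin z (B i) = ⊥ := by
        rw [← notMem_closure_iff_nhdsWithin_eq_bot, (hB i).closure_eq]
        exact hzi
      rw [this]
      exact Filter.tendsto_bot
  refine h1.mono_of_mem_nhdsWithin ?_
  rw [mem_nhdsWithin_iff_exists_mem_nhds_inter]
  refine ⟨N, hN, ?_⟩
  rintro w ⟨hw, hw'⟩
  obtain ⟨i, hi⟩ := mem_iUnion.1 hw'
  exact mem_biUnion (show i ∈ {i | (B i ∩ N).Nonempty} from ⟨w, hi, hw⟩) hi

open Classical in
noncomputable def dm {n : ℕ} (a b : Fin n → ℝ) : ℕ := (Finset.univ.filter (fun i => a i < b i)).card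

lemma seq_countable {X : Type*} [TopologicalSpace X] {x : X} {k m : ℕ} (hX : SeqNConnectedAt m X x)
    (hk : k ≤ m) {K : Type*} [Countable K] (f : K → C((Fin k → I), X))
    (hb : ∀ κ, ∀ y ∈ Cube.boundary (Fin k), f κ y = x) (hc : ClustersAt f x) :
    ∃ H : K → C((Fin k → I) × I, X),
      (∀ m y, H m (y, 0) = f m y) ∧
      (∀ m y, H m (y, 1) = x) ∧
      (∀ m t, ∀ y ∈ Cube.boundary (Fin k), H m (y, t) = x) ∧
      ClustersAt H x := by
  obtain ⟨e, he⟩ := exists_injective_nat K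
  let f' : ℕ → C((Fin k → I), X) := Function.extend e f (fun _ => ContinuousMap.const _ x)
  have hf' : ∀ κ, f' (e κ) = f κ := fun κ => he.extend_apply _ _ _
  have hf'' : ∀ m, (¬ ∃ κ, e κ = m) → f' m = ContinuousMap.const _ x :=
    fun m hm => Function.extend_apply' _ _ _ hm
  obtain ⟨H, h0, h1, h2, h3⟩ := hX k hk f' (by
    intro m y hy
    by_cases hm : ∃ κ, e κ = m
    · obtain ⟨κ, rfl⟩ := hm
      rw [hf']
      exact hb κ y hy
    · rw [hf'' m hm]
      rfl) (by
    intro V hV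
    refine ((hc V hV).image e).subset ?_
    intro m hm
    by_cases hm' : ∃ κ, e κ = m
    · obtain ⟨κ, rfl⟩ := hm'
      refine ⟨κ, ?_, rfl⟩
      simpa only [mem_ofPred_eq, hf'] using hm
    · exfalso
      apply hm
      rw [hf'' m hm']
      rintro _ ⟨y, rfl⟩
      exact mem_of_mem_nhds hV)
  refine ⟨fun κ => H (e κ), fun κ y => ?_, fun κ y => h1 _ _, fun κ t y hy => h2 _ _ _ hy, ?_⟩
  · rw [h0, hf']
  · intro V hV
    exact (h3 V hV).preimage he.injOn

lemma box_param {n j : ℕ} {a b : Fin n → ℝ} (hab : a ≤ b) (hd : dm a b = j) :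
    ∃ (p : (Fin j → I) → (Fin n → ℝ)) (q : (Fin n → ℝ) → (Fin j → I)),
      Continuous p ∧ Continuous q ∧ (∀ u, p u ∈ Icc a b) ∧ (∀ y ∈ Icc a b, p (q y) = y) ∧
      (∀ u ∈ Cube.boundary (Fin j), ¬ RelInt a b (p u)) ∧
      (∀ y ∈ Icc a b, ¬ RelInt a b y → q y ∈ Cube.boundary (Fin j)) := by
  classical
  have hd' : (Finset.univ.filter (fun i => a i < b i)).card = j := by
    rw [← hd, dm]
  let e := Finset.equivFinOfCardEq hd'
  have hm : ∀ i, a i < b i → i ∈ Finset.univ.filter (fun i => a i < b i) := by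
    intro i hi; simp [hi]
  have hlt : ∀ l, a (e.symm l).1 < b (e.symm l).1 := by
    intro l
    have := (e.symm l).2
    simp only [Finset.mem_filter] at this
    exact this.2
  let p : (Fin j → I) → (Fin n → ℝ) := fun u i =>
    if h : a i < b i then a i + (u (e ⟨i, hm i h⟩) : ℝ) * (b i - a i) else a i
  let q : (Fin n → ℝ) → (Fin j → I) := fun y l =>
    Set.projIcc (0:ℝ) 1 zero_le_one ((y (e.symm l).1 - a (e.symm l).1) /
      (b (e.symm l).1 - a (e.symm l).1))
  have hpm : ∀ u, p u ∈ Icc a b := by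
    intro u
    have : ∀ i, a i ≤ p u i ∧ p u i ≤ b i := by
      intro i
      by_cases h : a i < b i
      · simp only [p, h, dif_pos]
        have h0 := (u (e ⟨i, hm i h⟩)).2.1
        have h1 := (u (e ⟨i, hm i h⟩)).2.2
        constructor <;> nlinarith
      · simp only [p, h, dif_neg, not_false_eq_true]
        exact ⟨le_rfl, hab i⟩
    exact ⟨fun i => (this i).1, fun i => (this i).2⟩
  have hq : ∀ y ∈ Icc a b, ∀ l, ((q y l : I) : ℝ) = ((y (e.symm l).1 - a (e.symm l).1) /
      (b (e.symm l).1 - a (e.symm l).1)) := by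
    intro y hy l
    have h1 := hy.1 (e.symm l).1
    have h2 := hy.2 (e.symm l).1
    have h3 : 0 < b (e.symm l).1 - a (e.symm l).1 := by linarith [hlt l]
    simp only [q]
    rw [Set.projIcc_of_mem zero_le_one (show _ ∈ Icc (0:ℝ) 1 from
      ⟨div_nonneg (by linarith) h3.le, by rw [div_le_one h3]; linarith⟩)]
  refine ⟨p, q, ?_, ?_, hpm, ?_, ?_, ?_⟩
  · refine continuous_pi fun i => ?_
    by_cases h : a i < b i
    · simp only [p, h, dif_pos]
      fun_prop
    · simp only [p, h, dif_neg, not_false_eq_true]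
      fun_prop
  · refine continuous_pi fun l => ?_
    exact continuous_projIcc.comp (by fun_prop)
  · intro y hy
    funext i
    by_cases h : a i < b i
    · have h3 : b i - a i ≠ 0 := by linarith
      simp only [p, h, dif_pos]
      rw [hq y hy]
      simp only [Equiv.symm_apply_apply]
      field_simp
      ring
    · simp only [p, h, dif_neg, not_false_eq_true]
      have h1 := hy.1 i
      have h2 := hy.2 i
      linarith
  · rintro u ⟨l, hl⟩ hr
    have h1 := hr _ (hlt l)
    have h2 : p u (e.symm l).1 = a (e.symm l).1 + (u l : ℝ) * (b (e.symm l).1 - a (e.symm l).1) := by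
      simp only [p, hlt l, dif_pos, Subtype.coe_eta, Equiv.apply_symm_apply]
    rw [h2] at h1
    rcases hl with hl | hl <;> simp [hl] at h1
  · intro y hy hr
    simp only [RelInt, not_forall] at hr
    obtain ⟨i, hi, h⟩ := hr
    refine ⟨e ⟨i, hm i hi⟩, ?_⟩
    have h0 := hq y hy (e ⟨i, hm i hi⟩)
    simp only [Equiv.symm_apply_apply] at h0
    have h1 := hy.1 i
    have h2 := hy.2 i
    have h3 : b i - a i ≠ 0 := by linarith
    by_cases h4 : a i < y i
    · right
      have h5 : y i = b i := by
        by_contra hne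
        exact h ⟨h4, lt_of_le_of_ne h2 hne⟩
      apply Subtype.ext
      rw [h0, h5, div_self h3]
      rfl
    · left
      have h5 : y i = a i := by linarith
      apply Subtype.ext
      rw [h0, h5, sub_self, zero_div]
      rfl

lemma box_null {X : Type*} [TopologicalSpace X] {x : X} {j m n : ℕ} (hX : SeqNConnectedAt m X x)
    (hj : j ≤ m) {K : Type*} [Countable K] (a b : K → Fin n → ℝ) (hab : ∀ κ, a κ ≤ b κ)
    (hd : ∀ κ, dm (a κ) (b κ) = j) (l : K → (Fin n → ℝ) → X)
    (hl : ∀ κ, ContinuousOn (l κ) (Icc (a κ) (b κ)))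
    (hbd : ∀ κ, ∀ y ∈ Icc (a κ) (b κ), ¬ RelInt (a κ) (b κ) y → l κ y = x)
    (hcl : ∀ W ∈ nhds x, {κ | ¬ ∀ y ∈ Icc (a κ) (b κ), l κ y ∈ W}.Finite) :
    ∃ N : K → (Fin n → ℝ) × ℝ → X, (∀ κ, Continuous (N κ)) ∧
      (∀ κ, ∀ y ∈ Icc (a κ) (b κ), N κ (y, 0) = l κ y) ∧
      (∀ κ y, N κ (y, 1) = x) ∧
      (∀ κ, ∀ y ∈ Icc (a κ) (b κ), ¬ RelInt (a κ) (b κ) y → ∀ t, N κ (y, t) = x) ∧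
      (∀ W ∈ nhds x, {κ | ¬ ∀ p, N κ p ∈ W}.Finite) := by
  choose p q hp hq hpm hpq hpb hqb using fun κ => box_param (hab κ) (hd κ)
  obtain ⟨H, h0, h1, h2, h3⟩ := seq_countable hX hj
    (fun κ => (⟨fun u => l κ (p κ u), (hl κ).comp_continuous (hp κ) (hpm κ)⟩ : C((Fin j → I), X)))
    (fun κ y hy => hbd κ _ (hpm κ y) (hpb κ y hy)) (by
      intro W hW
      refine (hcl W hW).subset ?_
      intro κ hκ hc
      apply hκ
      rintro _ ⟨u, rfl⟩
      exact hc _ (hpm κ u))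
  refine ⟨fun κ z => H κ (q κ z.1, Set.projIcc (0:ℝ) 1 zero_le_one z.2), ?_, ?_, ?_, ?_, ?_⟩
  · intro κ
    exact (H κ).continuous.comp (((hq κ).comp continuous_fst).prodMk
      (continuous_projIcc.comp continuous_snd))
  · intro κ y hy
    have : Set.projIcc (0:ℝ) 1 zero_le_one 0 = 0 := Set.projIcc_left _
    simp only [this, h0]
    show l κ (p κ (q κ y)) = _
    rw [hpq κ y hy]
  · intro κ y
    have : Set.projIcc (0:ℝ) 1 zero_le_one 1 = 1 := Set.projIcc_right _
    simp only [this, h1]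
  · intro κ y hy hr t
    exact h2 _ _ _ (hqb κ y hy hr)
  · intro W hW
    refine (h3 W hW).subset ?_
    intro κ hκ hc
    apply hκ
    intro z
    exact hc ⟨_, rfl⟩

end NLoop

namespace NLoop

structure Cov {n : ℕ} {ι : Type*} (c d : ι → Fin n → ℝ) : Prop where
  lt : ∀ k i, c k i < d k i
  disj : ∀ k k', k ≠ k' → ∃ l, d k l ≤ c k' l ∨ d k' l ≤ c k l
  loc : ∀ y ∈ ⋃ k, Icc (c k) (d k), ∃ N ∈ nhds y, N ⊆ (⋃ k, Icc (c k) (d k)) ∧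
    {k | (Icc (c k) (d k) ∩ N).Nonempty}.Finite

def Cell {n : ℕ} {ι : Type*} (c d : ι → Fin n → ℝ) : Type _ :=
  {S : Finset ι // S.Nonempty ∧ ∃ y, ∀ k, k ∈ S ↔ y ∈ Icc (c k) (d k)}

section geo
variable {n : ℕ} {ι : Type*} {c d : ι → Fin n → ℝ}

noncomputable def ca (β : Cell c d) : Fin n → ℝ := fun i => β.1.sup' β.2.1 (fun k => c k i)
noncomputable def cb (β : Cell c d) : Fin n → ℝ := fun i => β.1.inf' β.2.1 (fun k => d k i)

lemma mem_cell {β : Cell c d} {y : Fin n → ℝ} :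
    y ∈ Icc (ca β) (cb β) ↔ ∀ k ∈ β.1, y ∈ Icc (c k) (d k) := by
  simp only [mem_Icc, Pi.le_def, ca, cb, Finset.sup'_le_iff, Finset.le_inf'_iff]
  constructor
  · intro h k hk
    exact ⟨fun i => h.1 i k hk, fun i => h.2 i k hk⟩
  · intro h
    exact ⟨fun i k hk => (h k hk).1 i, fun i k hk => (h k hk).2 i⟩

lemma ca_le_cb (β : Cell c d) : ca β ≤ cb β := by
  obtain ⟨y, hy⟩ := β.2.2
  have : y ∈ Icc (ca β) (cb β) := mem_cell.2 fun k hk => (hy k).1 hk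
  exact this.1.trans this.2

lemma Cov.nbhd (h : Cov c d) {y : Fin n → ℝ} (hy : y ∈ ⋃ k, Icc (c k) (d k)) :
    ∃ N ∈ nhds y, N ⊆ (⋃ k, Icc (c k) (d k)) ∧
      (∀ k, ∀ z ∈ N, z ∈ Icc (c k) (d k) → y ∈ Icc (c k) (d k)) := by
  obtain ⟨N, hN, hNU, hfin⟩ := h.loc y hy
  have hfin' : {k | (Icc (c k) (d k) ∩ N).Nonempty ∧ y ∉ Icc (c k) (d k)}.Finite :=
    hfin.subset fun k hk => hk.1
  refine ⟨N ∩ ⋂ k ∈ {k | (Icc (c k) (d k) ∩ N).Nonempty ∧ y ∉ Icc (c k) (d k)},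
    (Icc (c k) (d k))ᶜ, ?_, ?_, ?_⟩
  · refine Filter.inter_mem hN ((Filter.biInter_mem hfin').2 ?_)
    intro k hk
    exact isClosed_Icc.isOpen_compl.mem_nhds hk.2
  · exact inter_subset_left.trans hNU
  · rintro k z ⟨hz, hz'⟩ hzk
    by_contra hyk
    exact (mem_iInter₂.1 hz' k ⟨⟨z, hzk, hz⟩, hyk⟩) hzk

lemma Cov.finS (h : Cov c d) {y : Fin n → ℝ} (hy : y ∈ ⋃ k, Icc (c k) (d k)) :
    {k | y ∈ Icc (c k) (d k)}.Finite := by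
  obtain ⟨N, hN, hNU, hfin⟩ := h.loc y hy
  exact hfin.subset fun k hk => ⟨y, hk, mem_of_mem_nhds hN⟩

/-- direction dichotomy -/
lemma Cov.dich (h : Cov c d) {y : Fin n → ℝ} {k : ι} (hk : y ∈ Icc (c k) (d k)) (i : Fin n) :
    (c k i = y i → ∃ k', y ∈ Icc (c k') (d k') ∧ d k' i = y i) ∧
    (d k i = y i → ∃ k', y ∈ Icc (c k') (d k') ∧ c k' i = y i) := by
  have hyU : y ∈ ⋃ k, Icc (c k) (d k) := mem_iUnion.2 ⟨k, hk⟩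
  obtain ⟨N, hN, hNU, hS⟩ := h.nbhd hyU
  have hlt := h.lt k
  -- the curve
  have key : ∀ sg : ℝ, ∃ δ > 0, ∃ z ∈ N, z i = y i + δ * sg ∧ ∀ l, l ≠ i → c k l < z l ∧ z l < d k l := by
    intro sg
    let w : Fin n → ℝ := fun l => if l = i then sg else (c k l + d k l) / 2 - y l
    have hcont : Continuous (fun δ : ℝ => y + δ • w) := by fun_prop
    have hev : ∀ᶠ δ in nhds (0:ℝ), y + δ • w ∈ N :=
      hcont.continuousAt.eventually (by simpa using hN)
    obtain ⟨δ, hδ, hδ2⟩ := ((hev.filter_mono nhdsWithin_le_nhds).and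
      (Ioo_mem_nhdsGT (show (0:ℝ) < 1 from zero_lt_one))).exists
    refine ⟨δ, hδ2.1, _, hδ, by simp [w], ?_⟩
    intro l hl
    have h1 := hk.1 l
    have h2 := hk.2 l
    have h3 := hlt l
    simp only [Pi.add_apply, Pi.smul_apply, w, hl, if_false, smul_eq_mul]
    have := hδ2.1
    have := hδ2.2
    constructor <;> nlinarith
  have hlti := hlt i
  constructor
  · intro hc
    obtain ⟨δ, hδ, z, hz, hzi, hzl⟩ := key (-1)
    obtain ⟨k', hk'⟩ := mem_iUnion.1 (hNU hz)
    have hyk' := hS k' z hz hk'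
    refine ⟨k', hyk', ?_⟩
    have hne : k ≠ k' := by
      rintro rfl
      have := hk'.1 i
      linarith
    obtain ⟨l, hl⟩ := h.disj k k' hne
    by_cases hli : l = i
    · subst hli
      have h1 := hyk'.1 l
      have h2 := hyk'.2 l
      have h3 := hk'.1 l
      rcases hl with hl | hl <;> linarith
    · exfalso
      have h1 := hk'.1 l
      have h2 := hk'.2 l
      have h3 := hzl l hli
      rcases hl with hl | hl <;> linarith
  · intro hc
    obtain ⟨δ, hδ, z, hz, hzi, hzl⟩ := key 1
    obtain ⟨k', hk'⟩ := mem_iUnion.1 (hNU hz)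
    have hyk' := hS k' z hz hk'
    refine ⟨k', hyk', ?_⟩
    have hne : k ≠ k' := by
      rintro rfl
      have := hk'.2 i
      linarith
    obtain ⟨l, hl⟩ := h.disj k k' hne
    by_cases hli : l = i
    · subst hli
      have h1 := hyk'.1 l
      have h2 := hyk'.2 l
      have h3 := hk'.2 l
      rcases hl with hl | hl <;> linarith
    · exfalso
      have h1 := hk'.1 l
      have h2 := hk'.2 l
      have h3 := hzl l hli
      rcases hl with hl | hl <;> linarith

lemma relInt_of_S (h : Cov c d) {β : Cell c d} {y : Fin n → ℝ}
    (hy : ∀ k, k ∈ β.1 ↔ y ∈ Icc (c k) (d k)) : RelInt (ca β) (cb β) y := by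
  intro i hi
  have hm : y ∈ Icc (ca β) (cb β) := mem_cell.2 fun k hk => (hy k).1 hk
  constructor
  · refine lt_of_le_of_ne (hm.1 i) fun he => ?_
    obtain ⟨k, hk, hke⟩ := Finset.exists_mem_eq_sup' β.2.1 (fun k => c k i)
    have hce : c k i = y i := by rw [← he, ca, hke]
    obtain ⟨k', hk', hd⟩ := (h.dich ((hy k).1 hk) i).1 hce
    have : cb β i ≤ d k' i := Finset.inf'_le (fun k => d k i) ((hy k').2 hk')
    linarith
  · refine lt_of_le_of_ne (hm.2 i) fun he => ?_
    obtain ⟨k, hk, hke⟩ := Finset.exists_mem_eq_inf' β.2.1 (fun k => d k i)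
    have hce : d k i = y i := by rw [he, cb, hke]
    obtain ⟨k', hk', hd⟩ := (h.dich ((hy k).1 hk) i).2 hce
    have : c k' i ≤ ca β i := Finset.le_sup' (fun k => c k i) ((hy k').2 hk')
    linarith

lemma exists_cell (h : Cov c d) {y : Fin n → ℝ} (hy : y ∈ ⋃ k, Icc (c k) (d k)) :
    ∃ β : Cell c d, y ∈ Icc (ca β) (cb β) ∧ RelInt (ca β) (cb β) y := by
  obtain ⟨k, hk⟩ := mem_iUnion.1 hy
  let β : Cell c d := ⟨(h.finS hy).toFinset, ⟨k, by simpa using hk⟩, y, fun k => by simp⟩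
  have hβ : ∀ k, k ∈ β.1 ↔ y ∈ Icc (c k) (d k) := fun k => by simp [β]
  exact ⟨β, mem_cell.2 fun k hk => (hβ k).1 hk, relInt_of_S h hβ⟩

/-- points of the relative interior of a cell lie in exactly the cubes of that cell -/
lemma S_of_relInt (h : Cov c d) {β : Cell c d} {z : Fin n → ℝ} (hz : z ∈ Icc (ca β) (cb β))
    (hr : RelInt (ca β) (cb β) z) (k' : ι) (hk' : z ∈ Icc (c k') (d k')) : k' ∈ β.1 := by
  obtain ⟨y, hy⟩ := β.2.2
  obtain ⟨k0, hk0⟩ := β.2.1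
  have hyU : y ∈ ⋃ k, Icc (c k) (d k) := mem_iUnion.2 ⟨k0, (hy k0).1 hk0⟩
  have hm : y ∈ Icc (ca β) (cb β) := mem_cell.2 fun k hk => (hy k).1 hk
  obtain ⟨N, hN, hNU, hS⟩ := h.nbhd hyU
  by_contra hcon
  let w : Fin n → ℝ := fun l => (c k' l + d k' l) / 2 - z l
  have hcont : Continuous (fun δ : ℝ => y + δ • w) := by fun_prop
  have hev : ∀ᶠ δ in nhds (0:ℝ), y + δ • w ∈ N :=
    hcont.continuousAt.eventually (by simpa using hN)
  obtain ⟨δ, hδ, hδ2⟩ := ((hev.filter_mono nhdsWithin_le_nhds).and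
    (Ioo_mem_nhdsGT (show (0:ℝ) < 1 from zero_lt_one))).exists
  obtain ⟨k, hk⟩ := mem_iUnion.1 (hNU hδ)
  have hyk := hS k _ hδ hk
  have hkS := (hy k).2 hyk
  have hne : k ≠ k' := by
    rintro rfl
    exact hcon hkS
  obtain ⟨l, hl⟩ := h.disj k k' hne
  have e1 := hk.1 l
  have e2 := hk.2 l
  simp only [Pi.add_apply, Pi.smul_apply, smul_eq_mul, w] at e1 e2
  have hzk := mem_cell.1 hz k hkS
  have h1 := hzk.1 l
  have h2 := hzk.2 l
  have h3 := hk'.1 l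
  have h4 := hk'.2 l
  have h5 := hyk.1 l
  have h6 := hyk.2 l
  have h7 := h.lt k' l
  have h8 := hδ2.1
  have ha : c k l ≤ ca β l := Finset.le_sup' (fun k => c k l) hkS
  have hb : cb β l ≤ d k l := Finset.inf'_le (fun k => d k l) hkS
  rcases lt_or_ge (ca β l) (cb β l) with hab | hab
  · have := hr l hab
    rcases hl with hl | hl <;> linarith
  · have hzy : z l = y l := by
      have := hz.1 l
      have := hz.2 l
      have := hm.1 l
      have := hm.2 l
      linarith
    rcases hl with hl | hl
    · have : 0 < δ * ((c k' l + d k' l) / 2 - z l) := mul_pos h8 (by linarith)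
      linarith
    · have : 0 < δ * (z l - (c k' l + d k' l) / 2) := mul_pos h8 (by linarith)
      linarith

lemma dm_lt (h : Cov c d) {β γ : Cell c d} {y : Fin n → ℝ} (hy : y ∈ Icc (ca β) (cb β))
    (hr : RelInt (ca β) (cb β) y) (hg : y ∈ Icc (ca γ) (cb γ)) (hne : γ ≠ β) :
    dm (ca β) (cb β) < dm (ca γ) (cb γ) := by
  classical
  have hsub : γ.1 ⊆ β.1 := fun k hk => S_of_relInt h hy hr k (mem_cell.1 hg k hk)
  have ha : ∀ i, ca γ i ≤ ca β i := fun i => Finset.sup'_mono _ hsub _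
  have hb : ∀ i, cb β i ≤ cb γ i := fun i => Finset.inf'_mono _ hsub _
  unfold dm
  apply Finset.card_lt_card
  refine ⟨?_, ?_⟩
  · intro i hi
    simp only [Finset.mem_filter, Finset.mem_univ, true_and] at hi ⊢
    linarith [ha i, hb i]
  · intro hsub'
    apply hne
    have hrg : RelInt (ca γ) (cb γ) y := by
      intro i hi
      have : i ∈ Finset.univ.filter (fun i => ca β i < cb β i) := by
        have := @hsub' i (by simpa using hi)
        simpa using this
      have h1 := hr i (by simpa using this)
      exact ⟨(ha i).trans_lt h1.1, h1.2.trans_le (hb i)⟩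
    apply Subtype.ext
    apply Finset.Subset.antisymm hsub
    intro k hk
    exact S_of_relInt h hg hrg k (mem_cell.1 hy k hk)

lemma cell_sub_U (β : Cell c d) : Icc (ca β) (cb β) ⊆ ⋃ k, Icc (c k) (d k) := by
  intro y hy
  obtain ⟨k, hk⟩ := β.2.1
  exact mem_iUnion.2 ⟨k, mem_cell.1 hy k hk⟩

lemma cell_locfin (h : Cov c d) {y : Fin n → ℝ} (hy : y ∈ ⋃ k, Icc (c k) (d k)) :
    ∃ N ∈ nhds y, {β : Cell c d | (Icc (ca β) (cb β) ∩ N).Nonempty}.Finite := by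
  classical
  obtain ⟨N, hN, hNU, hS⟩ := h.nbhd hy
  refine ⟨N, hN, ?_⟩
  have hf : {S : Finset ι | S ⊆ (h.finS hy).toFinset}.Finite := by
    refine ((h.finS hy).toFinset.powerset.finite_toSet).subset ?_
    intro S hS
    simpa using hS
  refine (hf.preimage (f := fun β : Cell c d => β.1) Subtype.val_injective.injOn).subset ?_
  rintro β ⟨z, hz, hzN⟩ k hk
  simpa using hS k z hzN (mem_cell.1 hz k hk)

lemma int_unique (h : Cov c d) {k k' : ι} {y : Fin n → ℝ}
    (hy : ∀ i, c k i < y i ∧ y i < d k i) (hk' : y ∈ Icc (c k') (d k')) : k' = k := by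
  by_contra hne
  obtain ⟨l, hl⟩ := h.disj k' k hne
  have h1 := hy l
  have h3 := hk'.1 l
  have h4 := hk'.2 l
  rcases hl with hl | hl <;> linarith

/-- a cell meeting the interior of a cube has full dimension -/
lemma dm_of_int (h : Cov c d) {k : ι} {β : Cell c d} {y : Fin n → ℝ}
    (hy : ∀ i, c k i < y i ∧ y i < d k i) (hb : y ∈ Icc (ca β) (cb β)) :
    dm (ca β) (cb β) = n := by
  have hk : ∀ k' ∈ β.1, k' = k := fun k' hk' => int_unique h hy (mem_cell.1 hb k' hk')
  have : ∀ i, ca β i < cb β i := by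
    intro i
    obtain ⟨k1, hk1, e1⟩ := Finset.exists_mem_eq_sup' β.2.1 (fun k => c k i)
    obtain ⟨k2, hk2, e2⟩ := Finset.exists_mem_eq_inf' β.2.1 (fun k => d k i)
    rw [ca, cb, e1, e2, hk _ hk1, hk _ hk2]
    exact h.lt k i
  simp [dm, this]

lemma dm_of_bd (h : Cov c d) {k : ι} {y : Fin n → ℝ}
    (hy : y ∈ Icc (c k) (d k)) (hr : ¬ RelInt (c k) (d k) y) :
    ∃ β : Cell c d, dm (ca β) (cb β) < n ∧ y ∈ Icc (ca β) (cb β) := by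
  obtain ⟨β, hb, hbr⟩ := exists_cell h (mem_iUnion.2 ⟨k, hy⟩)
  refine ⟨β, ?_, hb⟩
  have hk := S_of_relInt h hb hbr k hy
  simp only [RelInt, not_forall] at hr
  obtain ⟨i, hi, h'⟩ := hr
  have hni : ¬ ca β i < cb β i := by
    intro hlt
    have h1 := hbr i hlt
    have ha : c k i ≤ ca β i := Finset.le_sup' (fun k => c k i) hk
    have hb : cb β i ≤ d k i := Finset.inf'_le (fun k => d k i) hk
    exact h' ⟨by linarith, by linarith⟩
  unfold dm
  calc _ < (Finset.univ : Finset (Fin n)).card := by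
        apply Finset.card_lt_card
        refine Finset.filter_ssubset.2 ⟨i, Finset.mem_univ _, hni⟩
    _ = n := by simp

end geo
end NLoop

namespace NLoop

section ind
variable {n : ℕ} {ι : Type*} {X : Type*} [TopologicalSpace X]

instance [Countable ι] (c d : ι → Fin n → ℝ) : Countable (Cell c d) := by
  unfold Cell
  infer_instance

/-- the skeleton of cells of dimension `< j` -/
def Sk (c d : ι → Fin n → ℝ) (j : ℕ) : Set (Fin n → ℝ) :=
  {y | ∃ β : Cell c d, dm (ca β) (cb β) < j ∧ y ∈ Icc (ca β) (cb β)}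

structure Stage (c d : ι → Fin n → ℝ) (F : (Fin n → ℝ) → X) (x₀ : X) (j : ℕ)
    (h : (Fin n → ℝ) × ℝ → X) : Prop where
  zero : ∀ y, h (y, 0) = F y
  cont : ContinuousOn h (Sk c d j ×ˢ Icc (0:ℝ) 1)
  one : ∀ y ∈ Sk c d j, h (y, 1) = x₀
  clus : ∀ W ∈ nhds x₀, {k | ¬ ∀ y ∈ Icc (c k) (d k), y ∈ Sk c d j →
    ∀ t ∈ Icc (0:ℝ) 1, h (y, t) ∈ W}.Finite

variable {c d : ι → Fin n → ℝ} {F : (Fin n → ℝ) → X} {x₀ : X}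

lemma bd_mem_Sk (hC : Cov c d) {β : Cell c d} {y : Fin n → ℝ} (hy : y ∈ Icc (ca β) (cb β))
    (hr : ¬ RelInt (ca β) (cb β) y) : y ∈ Sk c d (dm (ca β) (cb β)) := by
  obtain ⟨γ, hg, hgr⟩ := exists_cell hC (cell_sub_U β hy)
  refine ⟨γ, dm_lt hC hg hgr hy ?_, hg⟩
  rintro rfl
  exact hr hgr

lemma not_relInt_of_Sk (hC : Cov c d) {β : Cell c d} {y : Fin n → ℝ} (hy : y ∈ Icc (ca β) (cb β))
    (hs : y ∈ Sk c d (dm (ca β) (cb β))) : ¬ RelInt (ca β) (cb β) y := by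
  intro hr
  obtain ⟨γ, hg, hyg⟩ := hs
  have : γ ≠ β := by
    rintro rfl
    exact lt_irrefl _ hg
  have := dm_lt hC hy hr hyg this
  omega

lemma cell_glue (hC : Cov c d) (j : ℕ) (g : (Fin n → ℝ) × ℝ → X)
    (hg : ∀ β : Cell c d, dm (ca β) (cb β) < j →
      ContinuousOn g (Icc (ca β) (cb β) ×ˢ Icc (0:ℝ) 1)) :
    ContinuousOn g (Sk c d j ×ˢ Icc (0:ℝ) 1) := by
  have e : Sk c d j ×ˢ Icc (0:ℝ) 1 = ⋃ β : {β : Cell c d // dm (ca β) (cb β) < j},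
      (Icc (ca β.1) (cb β.1) ×ˢ Icc (0:ℝ) 1) := by
    ext ⟨y, t⟩
    simp only [Sk, mem_prod, mem_iUnion, Subtype.exists]
    constructor
    · rintro ⟨⟨β, h1, h2⟩, h3⟩
      exact ⟨β, h1, h2, h3⟩
    · rintro ⟨β, h1, h2, h3⟩
      exact ⟨⟨β, h1, h2⟩, h3⟩
  rw [e]
  apply glue
  · intro i
    exact isClosed_Icc.prod isClosed_Icc
  · rintro ⟨y, t⟩ hz
    obtain ⟨β, hy, ht⟩ := mem_iUnion.1 hz
    obtain ⟨N, hN, hfin⟩ := cell_locfin hC (cell_sub_U β.1 hy)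
    refine ⟨N ×ˢ univ, prod_mem_nhds hN Filter.univ_mem, ?_⟩
    refine (hfin.preimage (f := fun β : {β : Cell c d // dm (ca β) (cb β) < j} => β.1)
      Subtype.val_injective.injOn).subset ?_
    rintro γ ⟨⟨z, s⟩, hz1, hz2⟩
    exact ⟨z, hz1.1, hz2.1⟩
  · intro i
    exact hg i.1 i.2

open Classical in
lemma step [Countable ι] (hC : Cov c d) (hF : Continuous F)
    (hFc : ∀ W ∈ nhds x₀, {k | ¬ ∀ y ∈ Icc (c k) (d k), F y ∈ W}.Finite)
    {m j : ℕ} (hX : SeqNConnectedAt m X x₀) (hj : j ≤ m) {h : (Fin n → ℝ) × ℝ → X}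
    (hs : Stage c d F x₀ j h) : ∃ h', Stage c d F x₀ (j + 1) h' := by
  let K := {β : Cell c d // dm (ca β) (cb β) = j}
  let l : K → (Fin n → ℝ) → X := fun κ y => h (Rp (ca κ.1) (cb κ.1) y 1, Rt (ca κ.1) (cb κ.1) y 1)
  have hQ : ∀ κ : K, ∀ y ∈ Icc (ca κ.1) (cb κ.1), ¬ RelInt (ca κ.1) (cb κ.1) y → y ∈ Sk c d j := by
    intro κ y hy hr
    have := bd_mem_Sk hC hy hr
    rwa [κ.2] at this
  have hQ' : ∀ κ : K, ∀ y ∈ Icc (ca κ.1) (cb κ.1), y ∈ Sk c d j → ¬ RelInt (ca κ.1) (cb κ.1) y := by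
    intro κ y hy hr
    rw [← κ.2] at hr
    exact not_relInt_of_Sk hC hy hr
  have hcc : ∀ κ : K, ContinuousOn
      (fun p : (Fin n → ℝ) × ℝ => h (Rp (ca κ.1) (cb κ.1) p.1 p.2, Rt (ca κ.1) (cb κ.1) p.1 p.2))
      (Icc (ca κ.1) (cb κ.1) ×ˢ Icc (0:ℝ) 1) := fun κ => comp_cont hF hs.zero hs.cont (hQ κ)
  have h11 : (1:ℝ) ∈ Icc (0:ℝ) 1 := ⟨zero_le_one, le_rfl⟩
  -- values in good cubes
  have hval : ∀ W ∈ nhds x₀, ∀ k, (∀ y ∈ Icc (c k) (d k), F y ∈ W) →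
      (∀ y ∈ Icc (c k) (d k), y ∈ Sk c d j → ∀ t ∈ Icc (0:ℝ) 1, h (y, t) ∈ W) →
      ∀ κ : K, k ∈ κ.1.1 → ∀ y ∈ Icc (ca κ.1) (cb κ.1), ∀ t ∈ Icc (0:ℝ) 1,
      h (Rp (ca κ.1) (cb κ.1) y t, Rt (ca κ.1) (cb κ.1) y t) ∈ W := by
    intro W hW k h1 h2 κ hk y hy t ht
    exact comp_val hs.zero (hQ κ) (fun y hy => h1 y (mem_cell.1 hy k hk))
      (fun y hy => h2 y (mem_cell.1 hy k hk)) hy ht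
  obtain ⟨N, hNc, hN0, hN1, hNb, hNcl⟩ := box_null hX hj (fun κ : K => ca κ.1) (fun κ => cb κ.1)
    (fun κ => ca_le_cb _) (fun κ => κ.2) l
    (fun κ => (hcc κ).comp (f := fun y => (y, (1:ℝ))) (by fun_prop) (fun y hy => ⟨hy, h11⟩))
    (by
      intro κ y hy hr
      have h1 := rho_eq_one hy hr
      simp only [l, Rp_bd h1 zero_le_one, Rt_bd h1 zero_le_one]
      exact hs.one y (hQ κ y hy hr))
    (by
      intro W hW
      have hfin := (hFc W hW).union (hs.clus W hW)
      have hf : {S : Finset ι | S ⊆ hfin.toFinset}.Finite := by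
        refine (hfin.toFinset.powerset.finite_toSet).subset ?_
        intro S hS
        simpa using hS
      refine (hf.preimage (f := fun κ : K => κ.1.1)
        (Subtype.val_injective.comp Subtype.val_injective).injOn).subset ?_
      intro κ hκ k hk
      rw [Finite.mem_toFinset]
      by_contra hcon
      apply hκ
      rw [mem_union, not_or] at hcon
      intro y hy
      exact hval W hW k (not_not.1 hcon.1) (not_not.1 hcon.2) κ hk y hy 1 h11)
  let G : K → (Fin n → ℝ) × ℝ → X := fun κ p =>
    if p.2 ≤ 1 / 2 then h (Rp (ca κ.1) (cb κ.1) p.1 (2 * p.2), Rt (ca κ.1) (cb κ.1) p.1 (2 * p.2))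
    else N κ (p.1, 2 * p.2 - 1)
  let h' : (Fin n → ℝ) × ℝ → X := fun p =>
    if p.1 ∈ Sk c d j then h (p.1, min (2 * p.2) 1)
    else if hk : ∃ κ : K, p.1 ∈ Icc (ca κ.1) (cb κ.1) then G hk.choose p
    else F p.1
  have hG : ∀ κ : K, ∀ y ∈ Icc (ca κ.1) (cb κ.1), ∀ t ∈ Icc (0:ℝ) 1, h' (y, t) = G κ (y, t) := by
    intro κ y hy t ht
    by_cases hyS : y ∈ Sk c d j
    · have hr := hQ' κ y hy hyS
      have h1 := rho_eq_one hy hr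
      simp only [h', hyS, if_true, G]
      split_ifs with ht2
      · rw [Rp_bd h1 (by linarith [ht.1]), Rt_bd h1 (by linarith [ht.1]), min_eq_left (by linarith)]
      · rw [hNb κ y hy hr, min_eq_right (by linarith), hs.one y hyS]
    · have hk : ∃ κ : K, y ∈ Icc (ca κ.1) (cb κ.1) := ⟨κ, hy⟩
      simp only [h', hyS, if_false, hk, dif_pos]
      have : hk.choose = κ := by
        by_contra hne
        have hr : RelInt (ca κ.1) (cb κ.1) y := by
          by_contra hr
          exact hyS (hQ κ y hy hr)
        have := dm_lt hC hy hr hk.choose_spec (fun e => hne (Subtype.ext e))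
        rw [κ.2, hk.choose.2] at this
        exact lt_irrefl _ this
      rw [this]
  refine ⟨h', ?_, ?_, ?_, ?_⟩
  · intro y
    by_cases hyS : y ∈ Sk c d j
    · simp [h', hyS, hs.zero]
    · by_cases hk : ∃ κ : K, y ∈ Icc (ca κ.1) (cb κ.1)
      · obtain ⟨κ, hy⟩ := hk
        rw [hG κ y hy 0 ⟨le_rfl, zero_le_one⟩]
        simp [G, Rp_zero hy, Rt_zero hy, hs.zero]
      · simp only [h', hyS, if_false, hk, dif_neg, not_false_eq_true]
  · apply cell_glue hC
    intro β hβ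
    rcases Nat.lt_succ_iff_lt_or_eq.1 hβ with hβ | hβ
    · have : ContinuousOn (fun p : (Fin n → ℝ) × ℝ => h (p.1, min (2 * p.2) 1))
          (Icc (ca β) (cb β) ×ˢ Icc (0:ℝ) 1) := by
        refine hs.cont.comp (f := fun p : (Fin n → ℝ) × ℝ => (p.1, min (2 * p.2) 1)) ?_ ?_
        · fun_prop
        · rintro ⟨y, t⟩ ⟨hy, ht⟩
          exact ⟨⟨β, hβ, hy⟩, le_min (by linarith [ht.1]) zero_le_one, min_le_right _ _⟩
      refine this.congr ?_
      rintro ⟨y, t⟩ ⟨hy, ht⟩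
      have : y ∈ Sk c d j := ⟨β, hβ, hy⟩
      simp only [h', this, if_true]
    · let κ : K := ⟨β, hβ⟩
      have hcl : IsClosed (Icc (ca β) (cb β) ×ˢ Icc (0:ℝ) 1) := isClosed_Icc.prod isClosed_Icc
      have e : Icc (ca β) (cb β) ×ˢ Icc (0:ℝ) 1 =
          ((Icc (ca β) (cb β) ×ˢ Icc (0:ℝ) 1) ∩ {p | p.2 ≤ 1 / 2}) ∪
          ((Icc (ca β) (cb β) ×ˢ Icc (0:ℝ) 1) ∩ {p | 1 / 2 ≤ p.2}) := by
        rw [← inter_union_distrib_left]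
        refine (inter_eq_left.2 ?_).symm
        intro p _
        exact le_total p.2 (1/2)
      rw [e]
      apply ContinuousOn.union_of_isClosed
      · have h1 : ContinuousOn (fun p : (Fin n → ℝ) × ℝ =>
            h (Rp (ca κ.1) (cb κ.1) p.1 (2 * p.2), Rt (ca κ.1) (cb κ.1) p.1 (2 * p.2)))
            ((Icc (ca β) (cb β) ×ˢ Icc (0:ℝ) 1) ∩ {p | p.2 ≤ 1 / 2}) := by
          refine (hcc κ).comp (f := fun p : (Fin n → ℝ) × ℝ => (p.1, 2 * p.2)) (by fun_prop) ?_
          rintro ⟨y, t⟩ ⟨⟨hy, ht⟩, ht2⟩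
          have ht2' : t ≤ 1 / 2 := ht2
          exact ⟨hy, by linarith [ht.1], by linarith⟩
        refine h1.congr ?_
        rintro ⟨y, t⟩ ⟨⟨hy, ht⟩, ht2⟩
        have ht2' : t ≤ 1 / 2 := ht2
        rw [hG κ y hy t ht]
        simp only [G, ht2', if_true]
      · have h1 : Continuous (fun p : (Fin n → ℝ) × ℝ => N κ (p.1, 2 * p.2 - 1)) :=
          (hNc κ).comp (by fun_prop)
        refine h1.continuousOn.congr ?_
        rintro ⟨y, t⟩ ⟨⟨hy, ht⟩, ht2⟩
        have ht2' : 1 / 2 ≤ t := ht2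
        rw [hG κ y hy t ht]
        simp only [G]
        split_ifs with ht3
        · have : t = 1 / 2 := le_antisymm ht3 ht2'
          subst this
          norm_num
          rw [hN0 κ y hy]
        · rfl
      · exact hcl.inter (isClosed_le continuous_snd continuous_const)
      · exact hcl.inter (isClosed_le continuous_const continuous_snd)
  · rintro y ⟨β, hβ, hy⟩
    rcases Nat.lt_succ_iff_lt_or_eq.1 hβ with hβ | hβ
    · have hyS : y ∈ Sk c d j := ⟨β, hβ, hy⟩
      have : min (2 * (1:ℝ)) 1 = 1 := by norm_num
      simp only [h', hyS, if_true, this, hs.one y hyS]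
    · rw [hG ⟨β, hβ⟩ y hy 1 h11]
      have : ¬ ((1:ℝ) ≤ 1 / 2) := by norm_num
      have e : (2 * (1:ℝ) - 1) = 1 := by norm_num
      simp only [G, this, if_false, e, hN1]
  · intro W hW
    have hf3 : (⋃ κ ∈ {κ | ¬ ∀ p, N κ p ∈ W}, (κ.1.1 : Set ι)).Finite :=
      (hNcl W hW).biUnion fun κ _ => Finset.finite_toSet _
    refine (((hFc W hW).union (hs.clus W hW)).union hf3).subset ?_
    intro k hk
    by_contra hcon
    rw [mem_union, mem_union, not_or, not_or] at hcon
    obtain ⟨⟨g1, g2⟩, g3⟩ := hcon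
    have g1 := not_not.1 g1
    have g2 := not_not.1 g2
    apply hk
    intro y hyk hyS t ht
    obtain ⟨β, hyβ, hrβ⟩ := exists_cell hC (mem_iUnion.2 ⟨k, hyk⟩)
    have hkβ := S_of_relInt hC hyβ hrβ k hyk
    have hdim : dm (ca β) (cb β) < j + 1 := by
      obtain ⟨γ, hγ, hyγ⟩ := hyS
      by_cases he : γ = β
      · rwa [← he]
      · exact (dm_lt hC hyβ hrβ hyγ he).trans hγ
    rcases Nat.lt_succ_iff_lt_or_eq.1 hdim with hβ | hβ
    · have hyS : y ∈ Sk c d j := ⟨β, hβ, hyβ⟩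
      simp only [h', hyS, if_true]
      exact g2 y hyk hyS _ ⟨le_min (by linarith [ht.1]) zero_le_one, min_le_right _ _⟩
    · rw [hG ⟨β, hβ⟩ y hyβ t ht]
      simp only [G]
      split_ifs with ht2
      · exact hval W hW k g1 g2 ⟨β, hβ⟩ hkβ y hyβ _ ⟨by linarith [ht.1], by linarith⟩
      · by_contra hn
        apply g3
        refine mem_biUnion (x := (⟨β, hβ⟩ : K)) ?_ hkβ
        intro hall
        exact hn (hall _)

lemma all_stages [Countable ι] (hC : Cov c d) (hF : Continuous F)
    (hFc : ∀ W ∈ nhds x₀, {k | ¬ ∀ y ∈ Icc (c k) (d k), F y ∈ W}.Finite)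
    {m : ℕ} (hX : SeqNConnectedAt m X x₀) : ∀ j ≤ m + 1, ∃ h, Stage c d F x₀ j h := by
  intro j
  induction j with
  | zero =>
    intro _
    have : Sk c d 0 = ∅ := by
      ext y
      simp [Sk]
    refine ⟨fun p => F p.1, fun _ => rfl, ?_, ?_, ?_⟩
    · exact (hF.comp continuous_fst).continuousOn
    · simp [this]
    · intro W _
      simp [this]
  | succ j ih =>
    intro hj
    obtain ⟨h, hs⟩ := ih (by omega)
    exact step hC hF hFc hX (by omega) hs

/-- The Euclidean version of the theorem. -/
lemma main [Countable ι] (hC : Cov c d) (hF : Continuous F)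
    (hFc : ∀ W ∈ nhds x₀, {k | ¬ ∀ y ∈ Icc (c k) (d k), F y ∈ W}.Finite)
    (hn : 1 ≤ n) (hX : SeqNConnectedAt (n - 1) X x₀) :
    ∃ H : (Fin n → ℝ) × ℝ → X,
      ContinuousOn H ((⋃ k, Icc (c k) (d k)) ×ˢ Icc (0:ℝ) 1) ∧
      (∀ y, H (y, 0) = F y) ∧
      (∀ k, ∀ y ∈ Icc (c k) (d k), ¬ RelInt (c k) (d k) y → H (y, 1) = x₀) ∧
      (∀ k, ∀ y ∈ Icc (c k) (d k), (∀ i, (3 * c k i + d k i) / 4 ≤ y i ∧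
        y i ≤ (c k i + 3 * d k i) / 4) → H (y, 1) = F (fun i => 2 * y i - (c k i + d k i) / 2)) ∧
      (∀ W ∈ nhds x₀, {k | ¬ ∀ y ∈ Icc (c k) (d k), ∀ t ∈ Icc (0:ℝ) 1, H (y, t) ∈ W}.Finite) := by
  classical
  obtain ⟨h, hs⟩ := all_stages hC hF hFc hX n (by omega)
  have hQ : ∀ k, ∀ y ∈ Icc (c k) (d k), ¬ RelInt (c k) (d k) y → y ∈ Sk c d n :=
    fun k y hy hr => dm_of_bd hC hy hr
  let G : ι → (Fin n → ℝ) × ℝ → X := fun k p => h (Rp (c k) (d k) p.1 p.2, Rt (c k) (d k) p.1 p.2)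
  let H : (Fin n → ℝ) × ℝ → X := fun p =>
    if p.1 ∈ Sk c d n then h p
    else if hk : ∃ k, p.1 ∈ Icc (c k) (d k) then G hk.choose p
    else F p.1
  have h11 : (1:ℝ) ∈ Icc (0:ℝ) 1 := ⟨zero_le_one, le_rfl⟩
  have hG : ∀ k, ∀ y ∈ Icc (c k) (d k), ∀ t ∈ Icc (0:ℝ) 1, H (y, t) = G k (y, t) := by
    intro k y hy t ht
    by_cases hyS : y ∈ Sk c d n
    · have hr : ¬ RelInt (c k) (d k) y := by
        intro hr
        obtain ⟨β, hβ, hyβ⟩ := hyS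
        have := dm_of_int hC (fun i => hr i (hC.lt k i)) hyβ
        omega
      have h1 := rho_eq_one hy hr
      simp only [H, hyS, if_true, G]
      rw [Rp_bd h1 ht.1, Rt_bd h1 ht.1]
    · have hk : ∃ k, y ∈ Icc (c k) (d k) := ⟨k, hy⟩
      simp only [H, hyS, if_false, hk, dif_pos]
      have hr : RelInt (c k) (d k) y := by
        by_contra hr
        exact hyS (hQ k y hy hr)
      rw [int_unique hC (fun i => hr i (hC.lt k i)) hk.choose_spec]
  refine ⟨H, ?_, ?_, ?_, ?_, ?_⟩
  · rw [iUnion_prod_const]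
    apply glue
    · intro i
      exact isClosed_Icc.prod isClosed_Icc
    · rintro ⟨y, t⟩ hz
      obtain ⟨k, hy, ht⟩ := mem_iUnion.1 hz
      obtain ⟨N, hN, _, hfin⟩ := hC.loc y (mem_iUnion.2 ⟨k, hy⟩)
      refine ⟨N ×ˢ univ, prod_mem_nhds hN Filter.univ_mem, hfin.subset ?_⟩
      rintro γ ⟨⟨z, s⟩, hz1, hz2⟩
      exact ⟨z, hz1.1, hz2.1⟩
    · intro k
      refine (comp_cont hF hs.zero hs.cont (hQ k)).congr ?_
      rintro ⟨y, t⟩ ⟨hy, ht⟩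
      exact hG k y hy t ht
  · intro y
    by_cases hyS : y ∈ Sk c d n
    · simp [H, hyS, hs.zero]
    · by_cases hk : ∃ k, y ∈ Icc (c k) (d k)
      · obtain ⟨k, hy⟩ := hk
        rw [hG k y hy 0 ⟨le_rfl, zero_le_one⟩]
        simp [G, Rp_zero hy, Rt_zero hy, hs.zero]
      · simp only [H, hyS, if_false, hk, dif_neg, not_false_eq_true]
  · intro k y hy hr
    have h1 := rho_eq_one hy hr
    rw [hG k y hy 1 h11]
    simp only [G]
    rw [Rp_bd h1 zero_le_one, Rt_bd h1 zero_le_one, hs.one y (hQ k y hy hr)]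
  · intro k y hy hK
    have h1 : rho (c k) (d k) y ≤ 1 / 2 := by
      rw [rho, pi_norm_le_iff_of_nonneg (by norm_num)]
      intro i
      have h2 : 0 < d k i - c k i := by linarith [hC.lt k i]
      have := hK i
      rw [vv, Real.norm_eq_abs, abs_div, abs_of_pos h2, div_le_iff₀ h2, abs_le]
      constructor <;> linarith
    have h2 : (1 + 1) * rho (c k) (d k) y ≤ 1 := by linarith
    rw [hG k y hy 1 h11]
    simp only [G]
    rw [Rt_eq_zero h2, hs.zero]
    congr 1
    funext i
    simp only [Rp, Rc, max_eq_left h2]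
    ring
  · intro W hW
    refine ((hFc W hW).union (hs.clus W hW)).subset ?_
    intro k hk
    by_contra hcon
    rw [mem_union, not_or] at hcon
    apply hk
    intro y hy t ht
    rw [hG k y hy t ht]
    exact comp_val hs.zero (hQ k) (not_not.1 hcon.1) (not_not.1 hcon.2) hy ht

end ind
end NLoop

/-- **n-loop factorization along a Whitney cover.** Let `n ≥ 1`, `X` sequentially
`(n−1)`-connected at `x₀`, `f : I^n → X`, and `U` an open subset of the open cube `(0,1)^n`
with `f(∂U) = {x₀}`. Then for every Whitney cover of `U` — a countable family of `n`-cubes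
with union `U`, pairwise disjoint interiors, each meeting only finitely many others, and
all but finitely many contained in any neighborhood of `∂U` — there is a map `g : I^n → X`
homotopic to `f` by a homotopy constant on `I^n \ U`, with `g(∂C) = {x₀}` for every cube `C`
of the cover, and `g` equal to `f|_C` on some `n`-cube `K ⊆ int C`, up to the canonical
affine reparameterization. -/
theorem n_loop_factorization {X : Type*} [TopologicalSpace X] (n : ℕ) (hn : 1 ≤ n)
    (x₀ : X) (hX : SeqNConnectedAt (n - 1) X x₀)
    (f : C((Fin n → I), X)) (U : Set (Fin n → I)) (hUopen : IsOpen U)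
    (hUint : ∀ y ∈ U, ∀ i, (0:ℝ) < y i ∧ (y i : ℝ) < 1)
    (hfU : ∀ y ∈ frontier U, f y = x₀)
    (ι : Type*) [Countable ι] (cC dC : ι → Fin n → ℝ)
    (hCcube : ∀ k i, cC k i < dC k i)
    (hcover : U = ⋃ k, {y | inCube (cC k) (dC k) y})
    (hdisjint : ∀ k k', k ≠ k' → ∀ y : Fin n → I,
      ¬(inCubeInt (cC k) (dC k) y ∧ inCubeInt (cC k') (dC k') y))
    (hlocfin : ∀ k, {k' | k' ≠ k ∧
      ∃ y : Fin n → I, inCube (cC k) (dC k) y ∧ inCube (cC k') (dC k') y}.Finite)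
    (hshrink : ∀ V : Set (Fin n → I), IsOpen V → frontier U ⊆ V →
      {k | ¬ {y | inCube (cC k) (dC k) y} ⊆ V}.Finite) :
    ∃ g : C((Fin n → I), X),
      (∃ H : C((Fin n → I) × I, X),
        (∀ y, H (y, 0) = f y) ∧ (∀ y, H (y, 1) = g y) ∧
        ∀ y t, y ∉ U → H (y, t) = f y) ∧
      (∀ k y, onCubeBdry (cC k) (dC k) y → g y = x₀) ∧
      (∀ k, ∃ cK dK : Fin n → ℝ,
        (∀ i, cC k i < cK i ∧ cK i < dK i ∧ dK i < dC k i) ∧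
        ∀ y : Fin n → I, inCube cK dK y →
          g y = f (cubeAffine cK dK (cC k) (dC k) y)) := by
  classical
  let pr : (Fin n → ℝ) → (Fin n → I) := fun z i => Set.projIcc (0:ℝ) 1 zero_le_one (z i)
  let em : (Fin n → I) → (Fin n → ℝ) := fun y i => (y i : ℝ)
  have hprc : Continuous pr := continuous_pi fun i => continuous_projIcc.comp (continuous_apply i)
  have hemc : Continuous em := continuous_pi fun i => continuous_subtype_val.comp (continuous_apply i)
  have hpe : ∀ y, pr (em y) = y := fun y => funext fun i => Set.projIcc_val zero_le_one (y i)
  have hep : ∀ z : Fin n → ℝ, (∀ i, 0 ≤ z i ∧ z i ≤ 1) → em (pr z) = z := by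
    intro z hz
    funext i
    simp only [em, pr]
    rw [Set.projIcc_of_mem zero_le_one (show z i ∈ Icc (0:ℝ) 1 from hz i)]
  have hcubeU : ∀ k y, inCube (cC k) (dC k) y → y ∈ U := by
    intro k y hy
    rw [hcover]
    exact mem_iUnion.2 ⟨k, hy⟩
  let J := {k // ∃ y : Fin n → I, inCube (cC k) (dC k) y}
  have hJ : ∀ k : J, ∀ i, 0 < cC k.1 i ∧ dC k.1 i < 1 := by
    rintro ⟨k, y, hy⟩ i
    have hyi := hy i
    have h0 := (y i).2.1
    have h1 := (y i).2.2
    constructor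
    · by_contra hc
      have h2 : inCube (cC k) (dC k) (Function.update y i 0) := by
        intro l
        by_cases hl : l = i
        · subst hl
          simp only [Function.update_self, Icc.coe_zero]
          constructor <;> linarith
        · simpa [Function.update_of_ne hl] using hy l
      have h3 := (hUint _ (hcubeU k _ h2) i).1
      simp at h3
    · by_contra hc
      have h2 : inCube (cC k) (dC k) (Function.update y i 1) := by
        intro l
        by_cases hl : l = i
        · subst hl
          simp only [Function.update_self, Icc.coe_one]
          constructor <;> linarith
        · simpa [Function.update_of_ne hl] using hy l
      have h3 := (hUint _ (hcubeU k _ h2) i).2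
      simp at h3
  let c : J → Fin n → ℝ := fun k => cC k.1
  let d : J → Fin n → ℝ := fun k => dC k.1
  have hem : ∀ k : J, ∀ y, inCube (cC k.1) (dC k.1) y ↔ em y ∈ Icc (c k) (d k) := by
    intro k y
    constructor
    · intro h
      exact ⟨fun i => (h i).1, fun i => (h i).2⟩
    · intro h i
      exact ⟨h.1 i, h.2 i⟩
  have hepk : ∀ k : J, ∀ z ∈ Icc (c k) (d k), em (pr z) = z := by
    intro k z hz
    apply hep
    intro i
    have h1 := hJ k i
    exact ⟨h1.1.le.trans (hz.1 i), (hz.2 i).trans h1.2.le⟩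
  have hprk : ∀ k : J, ∀ z ∈ Icc (c k) (d k), inCube (cC k.1) (dC k.1) (pr z) := by
    intro k z hz
    rw [hem, hepk k z hz]
    exact hz
  have hUem : ∀ y, y ∈ U ↔ em y ∈ ⋃ k, Icc (c k) (d k) := by
    intro y
    rw [hcover]
    simp only [mem_iUnion]
    constructor
    · rintro ⟨k, hk⟩
      exact ⟨⟨k, y, hk⟩, (hem ⟨k, y, hk⟩ y).1 hk⟩
    · rintro ⟨k, hk⟩
      exact ⟨k.1, (hem k y).2 hk⟩
  have hfU' : ∀ y ∈ frontier U, y ∉ U := by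
    intro y hy hyU
    rw [hUopen.frontier_eq] at hy
    exact hy.2 hyU
  have hCov : NLoop.Cov c d := by
    refine ⟨fun k i => hCcube _ _, ?_, ?_⟩
    · intro k k' hne
      by_contra hcon
      push Not at hcon
      have hb : ∀ l, ∃ r : ℝ, c k l < r ∧ r < d k l ∧ c k' l < r ∧ r < d k' l := by
        intro l
        have h1 := hcon l
        have h2 : c k l < d k l := hCcube _ _
        have h3 : c k' l < d k' l := hCcube _ _
        obtain ⟨r, hr1, hr2⟩ := exists_between
          (show max (c k l) (c k' l) < min (d k l) (d k' l) from
            max_lt (lt_min h2 h1.2) (lt_min h1.1 h3))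
        exact ⟨r, (le_max_left _ _).trans_lt hr1, hr2.trans_le (min_le_left _ _),
          (le_max_right _ _).trans_lt hr1, hr2.trans_le (min_le_right _ _)⟩
      choose r hr using hb
      have he : em (pr r) = r := hepk k r ⟨fun i => (hr i).1.le, fun i => (hr i).2.1.le⟩
      have he' : ∀ i, ((pr r i : I) : ℝ) = r i := fun i => congrFun he i
      refine hdisjint k.1 k'.1 (fun e => hne (Subtype.ext e)) (pr r) ⟨?_, ?_⟩
      · intro i
        rw [he']
        exact ⟨(hr i).1, (hr i).2.1⟩
      · intro i
        rw [he']
        exact ⟨(hr i).2.2.1, (hr i).2.2.2⟩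
    · intro z hz
      obtain ⟨k, hk⟩ := mem_iUnion.1 hz
      have hyU : pr z ∈ U := hcubeU _ _ (hprk k z hk)
      obtain ⟨B, hB, hBc, hBU⟩ := exists_mem_nhds_isClosed_subset (hUopen.mem_nhds hyU)
      have hfin := hshrink Bᶜ hBc.isOpen_compl (fun y hy hyB => hfU' y hy (hBU hyB))
      refine ⟨pr ⁻¹' B ∩ Set.pi univ (fun _ => Ioo (0:ℝ) 1), ?_, ?_, ?_⟩
      · refine Filter.inter_mem (hprc.continuousAt hB) ?_
        refine (isOpen_set_pi finite_univ fun _ _ => isOpen_Ioo).mem_nhds ?_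
        intro i _
        have h1 := hJ k i
        exact ⟨h1.1.trans_le (hk.1 i), (hk.2 i).trans_lt h1.2⟩
      · rintro w ⟨hw, hw2⟩
        have hww : em (pr w) = w := hep w fun i => ⟨(hw2 i trivial).1.le, (hw2 i trivial).2.le⟩
        have := (hUem (pr w)).1 (hBU hw)
        rwa [hww] at this
      · refine (hfin.preimage (f := fun k : J => k.1) Subtype.val_injective.injOn).subset ?_
        rintro k' ⟨w, hw, hw2, -⟩ hsub
        exact hsub (hprk k' w hw) hw2
  obtain ⟨H, hHc, hH0, hHb, hHK, hHcl⟩ := NLoop.main hCov (F := fun z => f (pr z)) (x₀ := x₀)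
    (f.continuous.comp hprc) (by
      intro W hW
      have hfin := hshrink (f ⁻¹' (interior W)) (isOpen_interior.preimage f.continuous) (by
        intro y hy
        rw [mem_preimage, hfU y hy]
        exact mem_interior_iff_mem_nhds.2 hW)
      refine (hfin.preimage (f := fun k : J => k.1) Subtype.val_injective.injOn).subset ?_
      intro k hk hsub
      apply hk
      intro z hz
      exact interior_subset (hsub (hprk k z hz))) hn hX
  let H' : (Fin n → I) × I → X := fun p => if p.1 ∈ U then H (em p.1, (p.2 : ℝ)) else f p.1
  have hH' : Continuous H' := by
    rw [continuous_iff_continuousAt]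
    rintro ⟨y, t⟩
    by_cases hyU : y ∈ U
    · have hm : U ×ˢ (univ : Set I) ∈ nhds (y, t) :=
        prod_mem_nhds (hUopen.mem_nhds hyU) Filter.univ_mem
      have h1 : ContinuousOn (fun p : (Fin n → I) × I => H (em p.1, (p.2 : ℝ)))
          (U ×ˢ (univ : Set I)) := by
        refine hHc.comp (f := fun p : (Fin n → I) × I => (em p.1, (p.2 : ℝ)))
          ((hemc.comp continuous_fst).prodMk
            (continuous_subtype_val.comp continuous_snd)).continuousOn ?_
        rintro ⟨z, s⟩ ⟨hz, -⟩
        exact ⟨(hUem z).1 hz, s.2⟩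
      refine (h1.continuousAt hm).congr ?_
      filter_upwards [hm] with p hp
      have : p.1 ∈ U := hp.1
      simp only [H', this, if_true]
    · by_cases hyc : y ∈ closure U
      · have hyf : y ∈ frontier U := by
          rw [hUopen.frontier_eq]
          exact ⟨hyc, hyU⟩
        have hv : H' (y, t) = x₀ := by simp only [H', hyU, if_false, hfU y hyf]
        rw [ContinuousAt, hv]
        intro W hW
        have hfin := hHcl W hW
        have hcl : IsClosed (⋃ k ∈ {k | ¬ ∀ y ∈ Icc (c k) (d k), ∀ t ∈ Icc (0:ℝ) 1, H (y, t) ∈ W},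
            em ⁻¹' (Icc (c k) (d k))) :=
          hfin.isClosed_biUnion fun k _ => isClosed_Icc.preimage hemc
        have hy1 : ∀ᶠ z in nhds y, z ∉ (⋃ k ∈ {k | ¬ ∀ y ∈ Icc (c k) (d k), ∀ t ∈ Icc (0:ℝ) 1,
            H (y, t) ∈ W}, em ⁻¹' (Icc (c k) (d k))) := by
          refine hcl.isOpen_compl.mem_nhds ?_
          intro hmem
          obtain ⟨k, _, hk⟩ := mem_iUnion₂.1 hmem
          exact hyU ((hUem y).2 (mem_iUnion.2 ⟨k, hk⟩))
        have hy2 : ∀ᶠ z in nhds y, f z ∈ W :=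
          f.continuous.continuousAt (by rw [hfU y hyf]; exact hW)
        have hy3 : ∀ᶠ p in nhds (y, t), p.1 ∉ (⋃ k ∈ {k | ¬ ∀ y ∈ Icc (c k) (d k),
            ∀ t ∈ Icc (0:ℝ) 1, H (y, t) ∈ W}, em ⁻¹' (Icc (c k) (d k))) ∧ f p.1 ∈ W :=
          (continuous_fst.continuousAt (x := (y, t))).eventually (hy1.and hy2)
        rw [Filter.mem_map]
        filter_upwards [hy3] with p hp
        rw [mem_preimage]
        by_cases hpU : p.1 ∈ U
        · simp only [H', hpU, if_true]
          obtain ⟨k, hk⟩ := mem_iUnion.1 ((hUem p.1).1 hpU)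
          by_contra hn'
          apply hp.1
          refine mem_biUnion (x := k) ?_ hk
          intro hall
          exact hn' (hall _ hk _ p.2.2)
        · simp only [H', hpU, if_false]
          exact hp.2
      · have hm : ∀ᶠ p in nhds (y, t), p.1 ∉ closure U :=
          (continuous_fst.continuousAt (x := (y, t))).eventually
            (isClosed_closure.isOpen_compl.mem_nhds hyc)
        refine ((f.continuous.comp continuous_fst).continuousAt (x := (y, t))).congr ?_
        filter_upwards [hm] with p hp
        have : p.1 ∉ U := fun h => hp (subset_closure h)
        simp only [H', this, if_false, Function.comp]
  have hg : Continuous (fun y => H' (y, 1)) := hH'.comp (by fun_prop)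
  refine ⟨⟨fun y => H' (y, 1), hg⟩, ⟨⟨H', hH'⟩, ?_, fun _ => rfl, ?_⟩, ?_, ?_⟩
  · intro y
    show H' (y, 0) = f y
    by_cases hyU : y ∈ U
    · simp only [H', hyU, if_true, Icc.coe_zero, hH0, hpe]
    · simp only [H', hyU, if_false]
  · intro y t hyU
    show H' (y, t) = f y
    simp only [H', hyU, if_false]
  · rintro k y ⟨hy, i, hi⟩
    show H' (y, 1) = x₀
    have hyU := hcubeU k y hy
    simp only [H', hyU, if_true, Icc.coe_one]
    let k' : J := ⟨k, y, hy⟩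
    refine hHb k' _ ((hem k' y).1 hy) ?_
    intro hr
    have h1 := hr i (hCcube _ _)
    have h2 : cC k i < (y i : ℝ) ∧ (y i : ℝ) < dC k i := h1
    rcases hi with hi | hi <;> linarith
  · intro k
    refine ⟨fun i => (3 * cC k i + dC k i) / 4, fun i => (cC k i + 3 * dC k i) / 4, ?_, ?_⟩
    · intro i
      have := hCcube k i
      refine ⟨?_, ?_, ?_⟩ <;> linarith
    · intro y hyK
      show H' (y, 1) = _
      have hy : inCube (cC k) (dC k) y := by
        intro i
        have h1 := hyK i
        have h2 := hCcube k i
        simp only at h1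
        constructor <;> linarith
      have hyU := hcubeU k y hy
      simp only [H', hyU, if_true, Icc.coe_one]
      let k' : J := ⟨k, y, hy⟩
      rw [hHK k' _ ((hem k' y).1 hy) hyK]
      congr 1
      funext i
      simp only [pr, cubeAffine, em, c, d, k']
      congr 1
      have h2 : dC k i - cC k i ≠ 0 := by
        have := hCcube k i
        linarith
      have h3 : (cC k i + 3 * dC k i) / 4 - (3 * cC k i + dC k i) / 4 = (dC k i - cC k i) / 2 := by
        ring
      rw [h3]
      field_simp
      ring
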